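/- Entropic uncertainty principle with weights and localization operator: let H be a complex Hilbert space, (π_k)_{k=1}^N and (τ_j)_{j=1}^M two partitions of unity of bounded operators on H, v = (v_k)_{k=1}^N and w = (w_j)_{j=1}^M families of positive real numbers with V = max_k v_k and W = max_j w_j, O a bounded operator on H, U a linear isometry of H, and ε ≥ 0. Set c = max_{j,k} w_j · v_k · ‖τ_j U π_k* O‖ (operator norm). Then every unit vector ψ ∈ H satisfying ‖(Id − O) π_k ψ‖ ≤ ε for all k = 1,…,N satisfies p_{τ,w}(Uψ) + p_{π,v}(ψ) ≥ −2 · log( c + N·V·W·ε ). -/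

import Mathlib

open Finset

/-- `η(s) = -s log s`. -/
noncomputable def eta (s : ℝ) : ℝ := -s * Real.log s

/-- Pressure of a unit vector with respect to a quantum partition of unity `π`
and weights `v`. -/
noncomputable def pressure {H : Type*} [NormedAddCommGroup H] [InnerProductSpace ℂ H]
    {N : ℕ} (π : Fin N → H →L[ℂ] H) (v : Fin N → ℝ) (ψ : H) : ℝ :=
  (∑ k, eta (‖π k ψ‖ ^ 2)) - ∑ k, ‖π k ψ‖ ^ 2 * Real.log (v k ^ 2)

lemma aux_expsum {ι : Type*} [Fintype ι] (γ : ι → ℝ) (G : ι → ℂ) (C : ℝ) (hC : 0 < C)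
    (h0 : ∀ z : ℂ, z.re = 0 → ‖∑ i, Complex.exp (z * γ i) * G i‖ ≤ 1)
    (h1 : ∑ i, Real.exp (γ i) * ‖G i‖ ≤ C)
    (hG : ∑ i, G i = 1) :
    (∑ i, (γ i : ℂ) * G i).re ≤ Real.log C := by
  set F : ℂ → ℂ := fun z => ∑ i, Complex.exp (z * γ i) * G i with hF
  have hdF : Differentiable ℂ F := by
    rw [hF]; fun_prop
  have hnorm : ∀ (z : ℂ) (i : ι), ‖Complex.exp (z * γ i) * G i‖ = Real.exp (z.re * γ i) * ‖G i‖ := by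
    intro z i
    rw [norm_mul, Complex.norm_exp]
    simp
  have hB : BddAbove ((norm ∘ F) '' Complex.HadamardThreeLines.verticalClosedStrip 0 1) := by
    refine ⟨∑ i, Real.exp |γ i| * ‖G i‖, ?_⟩
    rintro _ ⟨z, hz, rfl⟩
    simp only [Complex.HadamardThreeLines.verticalClosedStrip, Set.mem_preimage, Set.mem_Icc] at hz
    refine (norm_sum_le _ _).trans (Finset.sum_le_sum fun i _ => ?_)
    rw [hnorm]
    gcongr
    calc z.re * γ i ≤ |z.re * γ i| := le_abs_self _
      _ = z.re * |γ i| := by rw [abs_mul, abs_of_nonneg hz.1]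
      _ ≤ 1 * |γ i| := by gcongr; exact hz.2
      _ = |γ i| := one_mul _
  have key : ∀ t : ℝ, 0 ≤ t → t ≤ 1 → (F t).re ≤ Real.exp (t * Real.log C) := by
    intro t ht0 ht1
    have := Complex.HadamardThreeLines.norm_le_interp_of_mem_verticalClosedStrip₀₁' F
      (z := (t : ℂ)) (a := 1) (b := C)
      (by simp [Complex.HadamardThreeLines.verticalClosedStrip, ht0, ht1])
      hdF.diffContOnCl hB (fun z hz => h0 z hz)
      (fun z hz => by
        refine ((norm_sum_le _ _).trans (le_of_eq ?_)).trans h1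
        refine Finset.sum_congr rfl fun i _ => ?_
        have hz' : z.re = 1 := hz
        rw [hnorm, hz', one_mul])
    rw [Real.one_rpow, one_mul, Complex.ofReal_re, Real.rpow_def_of_pos hC, mul_comm] at this
    exact (Complex.re_le_norm _).trans this
  have hder : HasDerivAt F (∑ i, (γ i : ℂ) * G i) ((0 : ℝ) : ℂ) := by
    rw [hF]
    refine HasDerivAt.fun_sum fun i _ => ?_
    have := (((hasDerivAt_id ((0 : ℝ) : ℂ)).mul_const (γ i : ℂ)).cexp).mul_const (G i)
    simpa using this
  have hderR := hder.real_of_complex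
  have hexp : HasDerivAt (fun t : ℝ => Real.exp (t * Real.log C)) (Real.log C) 0 := by
    have := ((hasDerivAt_id (0 : ℝ)).mul_const (Real.log C)).exp
    simpa using this
  have hsub := (hexp.sub hderR).tendsto_slope_zero_right
  have hnn : 0 ≤ Real.log C - (∑ i, (γ i : ℂ) * G i).re := by
    refine ge_of_tendsto hsub ?_
    filter_upwards [Ioo_mem_nhdsGT (zero_lt_one' ℝ)] with t ht
    have hk := key t ht.1.le ht.2.le
    have hF0 : F 0 = 1 := by simp [hF, hG]
    have : 0 ≤ t⁻¹ := inv_nonneg.2 ht.1.le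
    simp only [Pi.sub_apply, zero_add, smul_eq_mul, zero_mul, Real.exp_zero, Complex.ofReal_zero, hF0,
      Complex.one_re, sub_self, sub_zero]
    exact mul_nonneg this (by linarith)
  linarith

lemma aux_sum_sq {H : Type*} [NormedAddCommGroup H] [InnerProductSpace ℂ H] [CompleteSpace H]
    {N : ℕ} (π : Fin N → H →L[ℂ] H)
    (hπ : ∑ k, ContinuousLinearMap.adjoint (π k) ∘L π k = (1 : H →L[ℂ] H)) (x : H) :
    ∑ k, ‖π k x‖ ^ 2 = ‖x‖ ^ 2 := by
  have h : inner ℂ x ((∑ k, ContinuousLinearMap.adjoint (π k) ∘L π k) x) = inner ℂ x x := by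
    rw [hπ]; rfl
  simp only [ContinuousLinearMap.sum_apply, ContinuousLinearMap.comp_apply, inner_sum,
    ContinuousLinearMap.adjoint_inner_right, inner_self_eq_norm_sq_to_K] at h
  exact_mod_cast h

lemma aux_sum_adj {H : Type*} [NormedAddCommGroup H] [InnerProductSpace ℂ H] [CompleteSpace H]
    {N : ℕ} (π : Fin N → H →L[ℂ] H)
    (hπ : ∑ k, ContinuousLinearMap.adjoint (π k) ∘L π k = (1 : H →L[ℂ] H)) (f : Fin N → H)
    (hf : ∑ k, ‖f k‖ ^ 2 ≤ 1) :
    ‖∑ k, ContinuousLinearMap.adjoint (π k) (f k)‖ ≤ 1 := by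
  set s := ∑ k, ContinuousLinearMap.adjoint (π k) (f k) with hs
  have h1 : (inner ℂ s s : ℂ) = ∑ k, inner ℂ (π k s) (f k) := by
    conv_lhs => rw [hs, inner_sum, ← hs]
    simp only [ContinuousLinearMap.adjoint_inner_right]
  have h2 : ‖s‖ ^ 2 ≤ ∑ k, ‖π k s‖ * ‖f k‖ := by
    have : ‖(inner ℂ s s : ℂ)‖ = ‖s‖ ^ 2 := by
      rw [inner_self_eq_norm_sq_to_K]; simp
    rw [← this, h1]
    exact (norm_sum_le _ _).trans (Finset.sum_le_sum fun k _ => norm_inner_le_norm _ _)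
  have h3 : ∑ k, ‖π k s‖ * ‖f k‖ ≤ ∑ k, (‖π k s‖ ^ 2 + ‖f k‖ ^ 2) / 2 :=
    Finset.sum_le_sum fun k _ => by nlinarith [sq_nonneg (‖π k s‖ - ‖f k‖)]
  rw [← Finset.sum_div, Finset.sum_add_distrib, aux_sum_sq π hπ] at h3
  nlinarith [norm_nonneg s]

/-- Entropic uncertainty principle with weights and localization operator. -/
theorem entropic_uncertainty_weighted_localized
    {H : Type*} [NormedAddCommGroup H] [InnerProductSpace ℂ H] [CompleteSpace H]
    {N M : ℕ} [NeZero N] [NeZero M]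
    (π : Fin N → H →L[ℂ] H) (τ : Fin M → H →L[ℂ] H)
    (hπ : ∑ k, ContinuousLinearMap.adjoint (π k) ∘L π k = (1 : H →L[ℂ] H))
    (hτ : ∑ j, ContinuousLinearMap.adjoint (τ j) ∘L τ j = (1 : H →L[ℂ] H))
    (v : Fin N → ℝ) (w : Fin M → ℝ) (hv : ∀ k, 0 < v k) (hw : ∀ j, 0 < w j)
    (V W : ℝ) (hV : V = Finset.univ.sup' Finset.univ_nonempty v)
    (hW : W = Finset.univ.sup' Finset.univ_nonempty w)
    (O : H →L[ℂ] H)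
    (U : H →L[ℂ] H) (hU : ∀ x, ‖U x‖ = ‖x‖)
    (ε : ℝ) (hε : 0 ≤ ε)
    (c : ℝ)
    (hc : c = Finset.univ.sup' Finset.univ_nonempty fun jk : Fin M × Fin N =>
        w jk.1 * v jk.2 * ‖τ jk.1 ∘L U ∘L ContinuousLinearMap.adjoint (π jk.2) ∘L O‖)
    (ψ : H) (hψ : ‖ψ‖ = 1)
    (hloc : ∀ k, ‖((1 : H →L[ℂ] H) - O) (π k ψ)‖ ≤ ε) :
    pressure τ w (U ψ) + pressure π v ψ ≥ -2 * Real.log (c + N * V * W * ε) := by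
  have ha : ∑ k, ‖π k ψ‖ ^ 2 = 1 := by rw [aux_sum_sq π hπ, hψ]; norm_num
  have hb : ∑ j, ‖τ j (U ψ)‖ ^ 2 = 1 := by rw [aux_sum_sq τ hτ, hU, hψ]; norm_num
  have hUi : ∀ x y : H, (inner ℂ (U x) (U y) : ℂ) = inner ℂ x y :=
    fun x y => (⟨U.toLinearMap, hU⟩ : H →ₗᵢ[ℂ] H).inner_map_map x y
  have hτle : ∀ j (x : H), ‖τ j x‖ ≤ ‖x‖ := by
    intro j x
    have h1 := Finset.single_le_sum (f := fun j => ‖τ j x‖ ^ 2) (fun i _ => sq_nonneg _)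
      (Finset.mem_univ j)
    rw [aux_sum_sq τ hτ] at h1
    exact (sq_le_sq₀ (norm_nonneg _) (norm_nonneg _)).1 h1
  have hπle : ∀ k (x : H), ‖π k x‖ ≤ ‖x‖ := by
    intro j x
    have h1 := Finset.single_le_sum (f := fun j => ‖π j x‖ ^ 2) (fun i _ => sq_nonneg _)
      (Finset.mem_univ j)
    rw [aux_sum_sq π hπ] at h1
    exact (sq_le_sq₀ (norm_nonneg _) (norm_nonneg _)).1 h1
  have hπale : ∀ k (x : H), ‖ContinuousLinearMap.adjoint (π k) x‖ ≤ ‖x‖ := by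
    intro k x
    have h1 : ‖ContinuousLinearMap.adjoint (π k)‖ ≤ 1 := by
      rw [LinearIsometryEquiv.norm_map]
      exact ContinuousLinearMap.opNorm_le_bound _ zero_le_one fun x => by simpa using hπle k x
    simpa using ContinuousLinearMap.le_of_opNorm_le _ h1 x
  have hψs : ∑ k, ContinuousLinearMap.adjoint (π k) (π k ψ) = ψ := by
    have := congrArg (fun T : H →L[ℂ] H => T ψ) hπ
    simpa [ContinuousLinearMap.sum_apply] using this
  have hUψs : ∑ j, ContinuousLinearMap.adjoint (τ j) (τ j (U ψ)) = U ψ := by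
    have := congrArg (fun T : H →L[ℂ] H => T (U ψ)) hτ
    simpa [ContinuousLinearMap.sum_apply] using this
  have hvV : ∀ k, v k ≤ V := fun k => hV ▸ Finset.le_sup' v (Finset.mem_univ k)
  have hwW : ∀ j, w j ≤ W := fun j => hW ▸ Finset.le_sup' w (Finset.mem_univ j)
  have hcle : ∀ j k, w j * v k * ‖τ j ∘L U ∘L ContinuousLinearMap.adjoint (π k) ∘L O‖ ≤ c :=
    fun j k => hc ▸ Finset.le_sup' (fun jk : Fin M × Fin N =>
        w jk.1 * v jk.2 * ‖τ jk.1 ∘L U ∘L ContinuousLinearMap.adjoint (π jk.2) ∘L O‖)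
        (Finset.mem_univ (j, k))
  have hV0 : 0 < V := (hv 0).trans_le (hvV 0)
  have hW0 : 0 < W := (hw 0).trans_le (hwW 0)
  have hc0 : 0 ≤ c := le_trans (by have := hw 0; have := hv 0; positivity) (hcle 0 0)
  set G : Fin M × Fin N → ℂ := fun p =>
    inner ℂ (τ p.1 (U ψ)) (τ p.1 (U (ContinuousLinearMap.adjoint (π p.2) (π p.2 ψ)))) with hG
  set β : Fin M → ℝ := fun j => Real.log (‖τ j (U ψ)‖ * w j) with hβ
  set α : Fin N → ℝ := fun k => Real.log (‖π k ψ‖ * v k) with hα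
  set γ : Fin M × Fin N → ℝ := fun p => β p.1 + α p.2 with hγ
  have hGk : ∀ j, ∑ k, G (j, k) = ((‖τ j (U ψ)‖ ^ 2 : ℝ) : ℂ) := by
    intro j
    simp only [hG]
    rw [← inner_sum, ← map_sum, ← map_sum, hψs, inner_self_eq_norm_sq_to_K]
    simp
  have hGj : ∀ k, ∑ j, G (j, k) = ((‖π k ψ‖ ^ 2 : ℝ) : ℂ) := by
    intro k
    simp only [hG]
    simp only [← ContinuousLinearMap.adjoint_inner_left (τ _)]
    rw [← sum_inner, hUψs, hUi, ContinuousLinearMap.adjoint_inner_right,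
      inner_self_eq_norm_sq_to_K]
    simp
  have hGsum : ∑ p, G p = 1 := by
    rw [Fintype.sum_prod_type]
    simp only [hGk]
    exact_mod_cast hb
  have hre : (∑ p, (γ p : ℂ) * G p).re
      = ∑ j, ‖τ j (U ψ)‖ ^ 2 * β j + ∑ k, ‖π k ψ‖ ^ 2 * α k := by
    have : (∑ p, (γ p : ℂ) * G p)
      = ((∑ j, ‖τ j (U ψ)‖ ^ 2 * β j + ∑ k, ‖π k ψ‖ ^ 2 * α k : ℝ) : ℂ) := by
      simp only [hγ, Complex.ofReal_add, add_mul, Finset.sum_add_distrib]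
      congr 1
      · rw [Fintype.sum_prod_type]
        simp only [← Finset.mul_sum, hGk]
        push_cast
        exact Finset.sum_congr rfl fun _ _ => mul_comm _ _
      · rw [Fintype.sum_prod_type_right]
        simp only [← Finset.mul_sum, hGj]
        push_cast
        exact Finset.sum_congr rfl fun _ _ => mul_comm _ _
    rw [this, Complex.ofReal_re]
  have h0 : ∀ z : ℂ, z.re = 0 → ‖∑ i, Complex.exp (z * γ i) * G i‖ ≤ 1 := by
    intro z hz
    have hn : ∀ r : ℝ, ‖Complex.exp (z * r)‖ = 1 := by
      intro r; rw [Complex.norm_exp]; simp [hz]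
    have e : ∑ i, Complex.exp (z * γ i) * G i = inner ℂ
        (∑ j, ContinuousLinearMap.adjoint (τ j)
          ((starRingEnd ℂ) (Complex.exp (z * β j)) • τ j (U ψ)))
        (U (∑ k, ContinuousLinearMap.adjoint (π k) (Complex.exp (z * α k) • π k ψ))) := by
      rw [sum_inner, Fintype.sum_prod_type]
      refine Finset.sum_congr rfl fun j _ => ?_
      rw [map_sum, inner_sum]
      refine Finset.sum_congr rfl fun k _ => ?_
      rw [ContinuousLinearMap.adjoint_inner_left]
      simp only [map_smul, inner_smul_left, inner_smul_right, hG, hγ, Complex.conj_conj]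
      push_cast
      rw [mul_add, Complex.exp_add]
      ring
    rw [e]
    refine (norm_inner_le_norm _ _).trans ?_
    rw [hU]
    refine mul_le_one₀ (aux_sum_adj τ hτ _ ?_) (norm_nonneg _) (aux_sum_adj π hπ _ ?_)
    · simp only [norm_smul, RCLike.norm_conj, hn, one_mul, hb, le_refl]
    · simp only [norm_smul, hn, one_mul, ha, le_refl]
  have h1 : ∑ i, Real.exp (γ i) * ‖G i‖ ≤ c + N * V * W * ε := by
    have hterm : ∀ j k, Real.exp (γ (j, k)) * ‖G (j, k)‖
        ≤ ‖τ j (U ψ)‖ ^ 2 * (‖π k ψ‖ ^ 2 * c + V * W * ε) := by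
      intro j k
      have hpos : 0 ≤ ‖τ j (U ψ)‖ ^ 2 * (‖π k ψ‖ ^ 2 * c + V * W * ε) := by positivity
      by_cases hbj : ‖τ j (U ψ)‖ = 0
      · have : G (j, k) = 0 := by simp only [hG]; rw [norm_eq_zero.1 hbj, inner_zero_left]
        rw [this]; simpa using hpos
      by_cases hak : ‖π k ψ‖ = 0
      · have : G (j, k) = 0 := by
          simp only [hG]; rw [norm_eq_zero.1 hak]; simp
        rw [this]; simpa using hpos
      have hbj' : 0 < ‖τ j (U ψ)‖ := lt_of_le_of_ne (norm_nonneg _) (Ne.symm hbj)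
      have hak' : 0 < ‖π k ψ‖ := lt_of_le_of_ne (norm_nonneg _) (Ne.symm hak)
      have hwj := hw j
      have hvk := hv k
      have hexp : Real.exp (γ (j, k)) = ‖τ j (U ψ)‖ * w j * (‖π k ψ‖ * v k) := by
        simp only [hγ, hβ, hα]
        rw [Real.exp_add, Real.exp_log (by positivity), Real.exp_log (by positivity)]
      set D := ‖τ j ∘L U ∘L ContinuousLinearMap.adjoint (π k) ∘L O‖ with hD
      have hx : ‖τ j (U (ContinuousLinearMap.adjoint (π k) (π k ψ)))‖ ≤ D * ‖π k ψ‖ + ε := by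
        have hs : τ j (U (ContinuousLinearMap.adjoint (π k) (π k ψ)))
          = (τ j ∘L U ∘L ContinuousLinearMap.adjoint (π k) ∘L O) (π k ψ)
            + τ j (U (ContinuousLinearMap.adjoint (π k) (((1 : H →L[ℂ] H) - O) (π k ψ)))) := by
          simp
        rw [hs]
        refine (norm_add_le _ _).trans (add_le_add (ContinuousLinearMap.le_opNorm _ _) ?_)
        refine (hτle _ _).trans ?_
        rw [hU]
        exact (hπale _ _).trans (hloc k)
      have hGle : ‖G (j, k)‖ ≤ ‖τ j (U ψ)‖ * (D * ‖π k ψ‖ + ε) :=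
        (norm_inner_le_norm _ _).trans (by gcongr)
      rw [hexp]
      have hak1 : ‖π k ψ‖ ≤ 1 := hψ ▸ hπle k ψ
      calc _ ≤ ‖τ j (U ψ)‖ * w j * (‖π k ψ‖ * v k) * (‖τ j (U ψ)‖ * (D * ‖π k ψ‖ + ε)) := by
            gcongr
        _ = ‖τ j (U ψ)‖ ^ 2 * (‖π k ψ‖ ^ 2 * (w j * v k * D) + ‖π k ψ‖ * (v k * w j * ε)) := by
            ring
        _ ≤ ‖τ j (U ψ)‖ ^ 2 * (‖π k ψ‖ ^ 2 * c + 1 * (V * W * ε)) := by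
            have := hcle j k
            have := hvV k
            have := hwW j
            gcongr
        _ = _ := by ring
    rw [Fintype.sum_prod_type]
    calc _ ≤ ∑ j, ∑ k, ‖τ j (U ψ)‖ ^ 2 * (‖π k ψ‖ ^ 2 * c + V * W * ε) :=
          Finset.sum_le_sum fun j _ => Finset.sum_le_sum fun k _ => hterm j k
      _ = c + N * V * W * ε := by
          simp only [← Finset.mul_sum]
          rw [← Finset.sum_mul, hb, Finset.sum_add_distrib, ← Finset.sum_mul, ha]
          simp
          ring
  set C := c + N * V * W * ε with hCdef
  have hC0 : 0 ≤ C := by positivity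
  have hCpos : 0 < C := by
    rcases hC0.lt_or_eq with h | h
    · exact h
    · exfalso
      have := aux_expsum γ G (Real.exp ((∑ p, (γ p : ℂ) * G p).re - 1)) (Real.exp_pos _) h0
        (h1.trans (h ▸ (Real.exp_pos _).le)) hGsum
      rw [Real.log_exp] at this
      linarith
  have hmain := aux_expsum γ G C hCpos h0 h1 hGsum
  rw [hre] at hmain
  have hp : ∀ (x u : ℝ), 0 < u → 
      eta (x ^ 2) - x ^ 2 * Real.log (u ^ 2) = -2 * (x ^ 2 * Real.log (x * u)) := by
    intro x u hu
    by_cases hx : x = 0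
    · simp [hx, eta]
    · rw [eta, Real.log_mul hx hu.ne', Real.log_pow, Real.log_pow]
      push_cast
      ring
  have e1 : pressure τ w (U ψ) = -2 * ∑ j, ‖τ j (U ψ)‖ ^ 2 * β j := by
    rw [pressure, ← Finset.sum_sub_distrib, Finset.mul_sum]
    exact Finset.sum_congr rfl fun j _ => hp _ _ (hw j)
  have e2 : pressure π v ψ = -2 * ∑ k, ‖π k ψ‖ ^ 2 * α k := by
    rw [pressure, ← Finset.sum_sub_distrib, Finset.mul_sum]
    exact Finset.sum_congr rfl fun j _ => hp _ _ (hv j)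
  rw [e1, e2]
  linarith
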